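/- arXiv:2410.22305 — 2 statements merged into one kernel-verified Lean document; each statement's English description precedes it below -/
import Mathlib

section
/- For every sufficiently large integer k and every real 0 ≤ η ≤ 1/log k, the sum over all pairs of positive integers n, m with n·m² a perfect cube of d_k(n)d_k(m)/(nm)^{1-η} equals exp(O(k log log k)). -/
attribute [local instance] Classical.propDecidable

/-- The `k`-th divisor function `d_k(n)`. -/
noncomputable def dk (k n : ℕ) : ℕ := (ArithmeticFunction.zeta ^ k) n

/-! If `n * m ^ 2` is a cube then `N = n * m` is powerful, and `∑_{nm = N} d_k(n) d_k(m)` equals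
`d_{2k}(N)`. So with `K = 2k` and `σ = 1 - η` it is enough to bound the sum of `d_K(N) N ^ (-σ)`
over powerful `N`. Its Euler factor at `p` is `(1 - x) ^ (-K) - K * x` with `x = p ^ (-σ)`; deleting
the linear term makes this at most `exp (O(min(K * x, (K * x) ^ 2)))`, hence `exp (O((K * x) ^ r))`
for every `1 ≤ r ≤ 2`. Taking `r = 1 + c / log k` costs only a bounded factor in `K ^ r / K`, while
it pushes the exponent `σ * r` of `p` above `1 + 1 / log k`, so that
`∑ p ^ (-σ * r) ≤ log ζ(1 + 1 / log k)`, which is `O(log log k)`. -/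

open Real Finset

/-- A natural number is *powerful* if no prime divides it exactly once. With this encoding `0` is
powerful. -/
def IsPowerful (n : ℕ) : Prop := ∀ p, n.factorization p ≠ 1

lemma isPowerful_mul_of_mul_sq_eq_cube {n m c : ℕ} (hn : n ≠ 0) (hm : m ≠ 0)
    (h : n * m ^ 2 = c ^ 3) : IsPowerful (n * m) := by
  intro p
  have hp : n.factorization p + 2 * m.factorization p = 3 * c.factorization p := by
    simpa [Nat.factorization_mul hn (pow_ne_zero 2 hm)] using congrArg (fun a ↦ a.factorization p) h
  rw [Nat.factorization_mul hn hm, Finsupp.add_apply]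
  omega

lemma isPowerful_mul_iff {m n : ℕ} (h : m.Coprime n) :
    IsPowerful (m * n) ↔ IsPowerful m ∧ IsPowerful n := by
  simp only [IsPowerful, ← forall_and]
  refine forall_congr' fun p ↦ ?_
  have hp : m.factorization p = 0 ∨ n.factorization p = 0 := by
    by_contra! hmn
    exact disjoint_left.1 h.disjoint_primeFactors
      (Finsupp.mem_support_iff.2 hmn.1) (Finsupp.mem_support_iff.2 hmn.2)
  rw [Nat.factorization_mul_apply_of_coprime h]
  omega

lemma isPowerful_prime_pow_iff {p : ℕ} (hp : p.Prime) (e : ℕ) : IsPowerful (p ^ e) ↔ e ≠ 1 := by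
  simp only [IsPowerful, hp.factorization_pow, Finsupp.single_apply]
  exact ⟨fun h ↦ by simpa using h p, fun he q ↦ by split_ifs <;> simp [he]⟩

lemma dk_mul_of_coprime (k : ℕ) {m n : ℕ} (h : m.Coprime n) : dk k (m * n) = dk k m * dk k n :=
  ArithmeticFunction.isMultiplicative_zeta.pow.map_mul_of_coprime h

lemma dk_add (j k n : ℕ) :
    dk (j + k) n = ∑ x ∈ n.divisorsAntidiagonal, dk j x.1 * dk k x.2 := by
  rw [dk, pow_add, ArithmeticFunction.mul_apply]
  rfl

lemma dk_succ_prime_pow {p : ℕ} (hp : p.Prime) (k e : ℕ) :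
    dk (k + 1) (p ^ e) = (e + k).choose k := by
  induction k generalizing e with
  | zero => simp [dk, ArithmeticFunction.zeta_apply, hp.ne_zero]
  | succ k ih =>
    calc dk (k + 1 + 1) (p ^ e) = ∑ i ∈ range (e + 1), dk (k + 1) (p ^ i) := by
          rw [dk, pow_succ, ArithmeticFunction.mul_zeta_apply, Nat.sum_divisors_prime_pow hp]
          rfl
      _ = (e + (k + 1)).choose (k + 1) := by
          simp only [ih, Nat.sum_range_add_choose, add_assoc]

lemma dk_prime {p : ℕ} (hp : p.Prime) (k : ℕ) : dk k p = k := by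
  cases k with
  | zero => simp [dk, hp.ne_one]
  | succ k => simpa [add_comm] using dk_succ_prime_pow hp k 1

lemma hasSum_dk_prime_pow {p : ℕ} (hp : p.Prime) (k : ℕ) {x : ℝ} (hx : |x| < 1) :
    HasSum (fun e : ℕ ↦ (dk k (p ^ e) : ℝ) * x ^ e) ((1 - x) ^ k)⁻¹ := by
  cases k with
  | zero =>
    convert hasSum_ite_eq (0 : ℕ) (1 : ℝ) using 2 with e
    · rcases eq_or_ne e 0 with rfl | he
      · simp [dk]
      · simp [dk, he, hp.ne_one]
    · simp
  | succ k =>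
    simpa only [dk_succ_prime_pow hp, one_div] using
      hasSum_choose_mul_geometric_of_norm_lt_one k (r := x) hx

/-- The terms `d_K(n) n ^ (-σ)` restricted to powerful `n`. -/
noncomputable def powerfulTerm (K : ℕ) (σ : ℝ) : ArithmeticFunction ℝ where
  toFun n := if IsPowerful n then dk K n * (n : ℝ) ^ (-σ) else 0
  map_zero' := by simp [dk]

lemma powerfulTerm_apply (K : ℕ) (σ : ℝ) (n : ℕ) :
    powerfulTerm K σ n = if IsPowerful n then dk K n * (n : ℝ) ^ (-σ) else 0 :=
  rfl

lemma powerfulTerm_nonneg (K : ℕ) (σ : ℝ) (n : ℕ) : 0 ≤ powerfulTerm K σ n := by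
  rw [powerfulTerm_apply]
  split_ifs <;> positivity

lemma isMultiplicative_powerfulTerm (K : ℕ) (σ : ℝ) : (powerfulTerm K σ).IsMultiplicative := by
  constructor
  · have h1 : dk K 1 = 1 := ArithmeticFunction.isMultiplicative_zeta.pow.map_one
    simp [powerfulTerm_apply, IsPowerful, h1]
  · intro m n h
    simp only [powerfulTerm_apply, isPowerful_mul_iff h, dk_mul_of_coprime K h, Nat.cast_mul,
      mul_rpow (Nat.cast_nonneg m) (Nat.cast_nonneg n), ite_zero_mul_ite_zero]
    congr 1
    ring

lemma hasSum_powerfulTerm_prime_pow (K : ℕ) {σ : ℝ} (hσ : 0 < σ) {p : ℕ} (hp : p.Prime) :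
    HasSum (fun e : ℕ ↦ powerfulTerm K σ (p ^ e))
      (((1 - (p : ℝ) ^ (-σ)) ^ K)⁻¹ - K * (p : ℝ) ^ (-σ)) := by
  set x : ℝ := (p : ℝ) ^ (-σ)
  have hx : |x| < 1 := by
    rw [abs_of_nonneg (by positivity)]
    exact rpow_lt_one_of_one_lt_of_neg (mod_cast hp.one_lt) (neg_lt_zero.2 hσ)
  refine ((hasSum_dk_prime_pow hp K hx).sub (hasSum_ite_eq 1 (K * x))).congr_fun fun e ↦ ?_
  have hpow : ((p ^ e : ℕ) : ℝ) ^ (-σ) = x ^ e := by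
    rw [Nat.cast_pow, ← rpow_natCast_mul p.cast_nonneg, mul_comm, rpow_mul_natCast p.cast_nonneg]
  rw [powerfulTerm_apply, isPowerful_prime_pow_iff hp, hpow]
  rcases eq_or_ne e 1 with rfl | he
  · simp [dk_prime hp]
  · simp [he]

lemma summable_and_tsum_le_of_prod_primesBelow_le {f : ArithmeticFunction ℝ}
    (hf : f.IsMultiplicative) (hf₀ : ∀ n, 0 ≤ f n)
    (hsum : ∀ {p : ℕ}, p.Prime → Summable fun e : ℕ ↦ f (p ^ e)) {B : ℝ}
    (hB : ∀ M : ℕ, ∏ p ∈ M.primesBelow, ∑' e : ℕ, f (p ^ e) ≤ B) :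
    Summable f ∧ ∑' n, f n ≤ B := by
  have hfin : ∀ T : Finset ℕ, ∑ n ∈ T, f n ≤ B := by
    intro T
    set M := T.sup id + 1
    have hsmooth := EulerProduct.summable_and_hasSum_smoothNumbers_prod_primesBelow_tsum
      hf.map_one hf.map_mul_of_coprime (fun hp ↦ (hsum hp).norm) M
    have hmem : ∀ n ∈ T, n ∉ M.smoothNumbers → f n = 0 := by
      intro n hn hnM
      rcases eq_or_ne n 0 with rfl | hn0
      · exact f.map_zero
      · exact absurd (Nat.mem_smoothNumbers_of_lt (Nat.pos_of_ne_zero hn0)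
          (Nat.lt_succ_of_le (le_sup (f := id) hn))) hnM
    calc ∑ n ∈ T, f n = ∑ n ∈ T with n ∈ M.smoothNumbers, f n :=
          (sum_filter_of_ne fun n hn h ↦ by_contra fun hnM ↦ h (hmem n hn hnM)).symm
      _ = ∑ n ∈ T.subtype (· ∈ M.smoothNumbers), f n := (sum_subtype_eq_sum_filter _).symm
      _ ≤ ∑' n : M.smoothNumbers, f n := hsmooth.2.summable.sum_le_tsum _ fun n _ ↦ hf₀ n
      _ ≤ B := hsmooth.2.tsum_eq.trans_le (hB M)
  exact ⟨summable_of_sum_le hf₀ hfin, Real.tsum_le_of_sum_le hf₀ hfin⟩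

lemma min_self_sq_le_rpow {b r : ℝ} (hb : 0 ≤ b) (hr₁ : 1 ≤ r) (hr₂ : r ≤ 2) :
    min b (b ^ 2) ≤ b ^ r := by
  rcases le_total b 1 with h | h
  · refine (min_le_right _ _).trans ?_
    rw [← rpow_two]
    exact rpow_le_rpow_of_exponent_ge_of_imp hb h hr₂ fun _ h0 ↦ by linarith
  · exact (min_le_left _ _).trans (self_le_rpow_of_one_le h hr₁)

lemma exp_sub_self_le_exp_min {b : ℝ} (hb : 0 ≤ b) : exp b - b ≤ exp (min b (b ^ 2)) := by
  rcases le_total b 1 with h | h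
  · have hquad := (abs_le.1 (abs_exp_sub_one_sub_id_le ((abs_of_nonneg hb).trans_le h))).2
    rw [min_eq_right (by nlinarith)]
    linarith [add_one_le_exp (b ^ 2)]
  · rw [min_eq_left (by nlinarith)]
    linarith

lemma inv_one_sub_le_exp_div {x : ℝ} (hx : x < 1) : (1 - x)⁻¹ ≤ exp (x / (1 - x)) := by
  have hx' : 1 - x ≠ 0 := (sub_pos.2 hx).ne'
  calc (1 - x)⁻¹ = x / (1 - x) + 1 := by field_simp; ring
    _ ≤ exp (x / (1 - x)) := add_one_le_exp _

lemma inv_one_sub_pow_sub_le_exp_min (K : ℕ) {x : ℝ} (hx₀ : 0 ≤ x) (hx₁ : x < 1) :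
    ((1 - x) ^ K)⁻¹ - K * x ≤ exp (2 * min (K * x / (1 - x)) ((K * x / (1 - x)) ^ 2)) := by
  have hx : 0 < 1 - x := sub_pos.2 hx₁
  set b := K * x / (1 - x) with hb
  have hb₀ : 0 ≤ b := by positivity
  have hpow : ((1 - x) ^ K)⁻¹ ≤ exp b := by
    calc ((1 - x) ^ K)⁻¹ = (1 - x)⁻¹ ^ K := (inv_pow _ _).symm
      _ ≤ exp (x / (1 - x)) ^ K :=
          pow_le_pow_left₀ (by positivity) (inv_one_sub_le_exp_div hx₁) K
      _ = exp b := by rw [← exp_nat_mul, hb, mul_div_assoc]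
  have hlin : b - K * x = b * x := by
    rw [hb]
    field_simp
    ring
  have hbx : b * x ≤ min b (b ^ 2) := by
    refine le_min (mul_le_of_le_one_right hb₀ hx₁.le) ?_
    rcases K.eq_zero_or_pos with rfl | hK
    · simp [hb]
    · have hxb : x ≤ b := by
        have hK' : (1 : ℝ) ≤ K := mod_cast hK
        rw [hb, le_div_iff₀ hx]
        nlinarith
      nlinarith
  set v := min b (b ^ 2)
  have hv : 0 ≤ v := le_min hb₀ (sq_nonneg b)
  calc ((1 - x) ^ K)⁻¹ - K * x ≤ (exp b - b) + b * x := by linarith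
    _ ≤ exp v + v := add_le_add (exp_sub_self_le_exp_min hb₀) hbx
    _ ≤ exp v * (v + 1) := by nlinarith [one_le_exp hv]
    _ ≤ exp v * exp v := by gcongr; exact add_one_le_exp v
    _ = exp (2 * v) := by rw [← exp_add, two_mul]

lemma inv_one_sub_pow_sub_le_exp_rpow (K : ℕ) {x r : ℝ} (hx₀ : 0 ≤ x) (hx₁ : x ≤ 3 / 4)
    (hr₁ : 1 ≤ r) (hr₂ : r ≤ 2) :
    ((1 - x) ^ K)⁻¹ - K * x ≤ exp (32 * (K * x) ^ r) := by
  set b : ℝ := K * x / (1 - x) with hb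
  have hb₀ : 0 ≤ b := div_nonneg (by positivity) (by linarith)
  have hb₄ : b ≤ 4 * (K * x) := by
    rw [hb, div_le_iff₀ (by linarith)]
    nlinarith [mul_nonneg K.cast_nonneg hx₀]
  have h4r : (4 : ℝ) ^ r ≤ 16 := by
    calc (4 : ℝ) ^ r ≤ 4 ^ (2 : ℝ) := rpow_le_rpow_of_exponent_le (by norm_num) hr₂
      _ = 16 := by norm_num
  refine (inv_one_sub_pow_sub_le_exp_min K hx₀ (by linarith)).trans (exp_le_exp.2 ?_)
  calc 2 * min b (b ^ 2) ≤ 2 * b ^ r := by gcongr; exact min_self_sq_le_rpow hb₀ hr₁ hr₂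
    _ ≤ 2 * (4 * (K * x)) ^ r := by gcongr
    _ = 2 * 4 ^ r * (K * x) ^ r := by rw [mul_rpow (by norm_num) (by positivity), mul_assoc]
    _ ≤ 32 * (K * x) ^ r := by gcongr; linarith

lemma tsum_one_div_nat_rpow_le {s : ℝ} (hs : 1 < s) :
    ∑' n : ℕ, 1 / (n : ℝ) ^ s ≤ 1 + 1 / (s - 1) := by
  have hterm : 0 ≤ s * ZetaAsymptotics.termTSum s :=
    mul_nonneg (by linarith) (tsum_nonneg fun n ↦ ZetaAsymptotics.term_nonneg _ _)
  have hshift := (summable_one_div_nat_rpow.2 hs).tsum_eq_zero_add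
  rw [Nat.cast_zero, zero_rpow (by linarith), div_zero, zero_add] at hshift
  push_cast at hshift
  linarith [ZetaAsymptotics.zeta_limit_aux1 hs]

lemma sum_primesBelow_rpow_neg_le_log {s : ℝ} (hs : 1 < s) (M : ℕ) :
    ∑ p ∈ M.primesBelow, (p : ℝ) ^ (-s) ≤ log (1 + 1 / (s - 1)) := by
  let f : ℕ →* ℝ :=
    { toFun := fun n ↦ (n : ℝ) ^ (-s)
      map_one' := by simp
      map_mul' := fun a b ↦ by rw [Nat.cast_mul, mul_rpow a.cast_nonneg b.cast_nonneg] }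
  have hf₀ (n : ℕ) : 0 ≤ f n := rpow_nonneg n.cast_nonneg _
  have hf (n : ℕ) : f n = 1 / (n : ℝ) ^ s := by
    rw [one_div, ← rpow_neg n.cast_nonneg]
    rfl
  have hsum : Summable f := (summable_one_div_nat_rpow.2 hs).congr fun n ↦ (hf n).symm
  have hexp : ∀ p ∈ M.primesBelow, exp (f p) ≤ (1 - f p)⁻¹ := by
    intro p hp
    have hlt : f p < 1 := rpow_lt_one_of_one_lt_of_neg
      (mod_cast (Nat.prime_of_mem_primesBelow hp).one_lt) (by linarith)
    rw [le_inv_comm₀ (exp_pos _) (sub_pos.2 hlt), ← exp_neg]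
    exact one_sub_le_exp_neg (f p)
  rw [le_log_iff_exp_le (by have := sub_pos.2 hs; positivity)]
  calc exp (∑ p ∈ M.primesBelow, f p) = ∏ p ∈ M.primesBelow, exp (f p) := exp_sum _ _
    _ ≤ ∏ p ∈ M.primesBelow, (1 - f p)⁻¹ := prod_le_prod (fun _ _ ↦ (exp_pos _).le) hexp
    _ = ∑' n : M.smoothNumbers, f n :=
        EulerProduct.prod_primesBelow_geometric_eq_tsum_smoothNumbers hsum M
    _ ≤ ∑' n, f n := hsum.tsum_subtype_le (γ := ℝ) f _ hf₀
    _ = ∑' n : ℕ, 1 / (n : ℝ) ^ s := tsum_congr hf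
    _ ≤ 1 + 1 / (s - 1) := tsum_one_div_nat_rpow_le hs

lemma rpow_neg_le_three_quarters {a σ : ℝ} (ha : 2 ≤ a) (hσ : 1 / 2 ≤ σ) :
    a ^ (-σ) ≤ 3 / 4 := by
  calc a ^ (-σ) ≤ a ^ (-(1 / 2) : ℝ) := rpow_le_rpow_of_exponent_le (by linarith) (neg_le_neg hσ)
    _ ≤ 2 ^ (-(1 / 2) : ℝ) := rpow_le_rpow_of_nonpos (by norm_num) ha (by norm_num)
    _ = (√2)⁻¹ := by rw [rpow_neg (by norm_num), ← sqrt_eq_rpow]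
    _ ≤ 3 / 4 := by
        rw [inv_le_comm₀ (by positivity) (by norm_num)]
        exact le_sqrt_of_sq_le (by norm_num)

lemma summable_and_tsum_powerfulTerm_le (K : ℕ) {σ r : ℝ} (hσ : 1 / 2 ≤ σ) (hr₁ : 1 ≤ r)
    (hr₂ : r ≤ 2) (hσr : 1 < σ * r) :
    Summable (powerfulTerm K σ) ∧
      ∑' n, powerfulTerm K σ n ≤ exp (32 * K ^ r * log (1 + 1 / (σ * r - 1))) := by
  have hEuler {p : ℕ} (hp : p.Prime) := hasSum_powerfulTerm_prime_pow K (by linarith) hp (σ := σ)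
  refine summable_and_tsum_le_of_prod_primesBelow_le (isMultiplicative_powerfulTerm K σ)
    (powerfulTerm_nonneg K σ) (fun hp ↦ (hEuler hp).summable) fun M ↦ ?_
  have hfactor : ∀ p ∈ M.primesBelow,
      ∑' e : ℕ, powerfulTerm K σ (p ^ e) ≤ exp (32 * K ^ r * (p : ℝ) ^ (-(σ * r))) := by
    intro p hpM
    have hp := Nat.prime_of_mem_primesBelow hpM
    have hp₂ : (2 : ℝ) ≤ p := mod_cast hp.two_le
    calc ∑' e : ℕ, powerfulTerm K σ (p ^ e)
        = ((1 - (p : ℝ) ^ (-σ)) ^ K)⁻¹ - K * (p : ℝ) ^ (-σ) := (hEuler hp).tsum_eq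
      _ ≤ exp (32 * (K * (p : ℝ) ^ (-σ)) ^ r) := inv_one_sub_pow_sub_le_exp_rpow K
          (by positivity) (rpow_neg_le_three_quarters hp₂ hσ) hr₁ hr₂
      _ = exp (32 * K ^ r * (p : ℝ) ^ (-(σ * r))) := by
          rw [mul_rpow (by positivity) (by positivity), ← rpow_mul p.cast_nonneg, neg_mul,
            mul_assoc]
  calc ∏ p ∈ M.primesBelow, ∑' e : ℕ, powerfulTerm K σ (p ^ e)
      ≤ ∏ p ∈ M.primesBelow, exp (32 * K ^ r * (p : ℝ) ^ (-(σ * r))) :=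
        prod_le_prod (fun p _ ↦ tsum_nonneg fun e ↦ powerfulTerm_nonneg K σ _) hfactor
    _ = exp (32 * K ^ r * ∑ p ∈ M.primesBelow, (p : ℝ) ^ (-(σ * r))) := by
        rw [← exp_sum, mul_sum]
    _ ≤ exp (32 * K ^ r * log (1 + 1 / (σ * r - 1))) := by
        gcongr
        exact sum_primesBelow_rpow_neg_le_log hσr M

lemma summable_and_tsum_le_of_sum_divisorsAntidiagonal_le {u : ℕ × ℕ → ℝ} {g : ℕ → ℝ}
    (hu : ∀ x, 0 ≤ u x) (hu₀ : ∀ x : ℕ × ℕ, x.1 * x.2 = 0 → u x = 0)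
    (hug : ∀ N : ℕ, ∑ x ∈ N.divisorsAntidiagonal, u x ≤ g N) (hg : Summable g) :
    Summable u ∧ ∑' x, u x ≤ ∑' N, g N := by
  have hg₀ (N : ℕ) : 0 ≤ g N := (sum_nonneg fun x _ ↦ hu x).trans (hug N)
  have hfiber (F : Finset (ℕ × ℕ)) (N : ℕ) : ∑ x ∈ F with x.1 * x.2 = N, u x ≤ g N := by
    rcases eq_or_ne N 0 with rfl | hN
    · rw [sum_eq_zero fun x hx ↦ hu₀ x (mem_filter.1 hx).2]
      exact hg₀ 0
    · refine le_trans (sum_le_sum_of_subset_of_nonneg (fun x hx ↦ ?_) fun x _ _ ↦ hu x) (hug N)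
      exact Nat.mem_divisorsAntidiagonal.2 ⟨(mem_filter.1 hx).2, hN⟩
  have hfin : ∀ F : Finset (ℕ × ℕ), ∑ x ∈ F, u x ≤ ∑' N, g N := by
    intro F
    calc ∑ x ∈ F, u x = ∑ N ∈ F.image fun x ↦ x.1 * x.2, ∑ x ∈ F with x.1 * x.2 = N, u x :=
          (sum_fiberwise_of_maps_to (fun x hx ↦ mem_image_of_mem _ hx) u).symm
      _ ≤ ∑ N ∈ F.image fun x ↦ x.1 * x.2, g N := sum_le_sum fun N _ ↦ hfiber F N
      _ ≤ ∑' N, g N := hg.sum_le_tsum _ fun N _ ↦ hg₀ N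
  exact ⟨summable_of_sum_le hu hfin, Real.tsum_le_of_sum_le hu hfin⟩

/-- The term of the sum over pairs `(n, m)` with `n * m ^ 2` a cube, with `σ` in place of `1 - η`,
extended by `0` to all pairs. -/
noncomputable def cubePairTerm (k : ℕ) (σ : ℝ) (nm : ℕ × ℕ) : ℝ :=
  if 0 < nm.1 ∧ 0 < nm.2 ∧ (∃ c : ℕ, nm.1 * nm.2 ^ 2 = c ^ 3)
  then (dk k nm.1 * dk k nm.2 : ℝ) / ((nm.1 * nm.2 : ℝ) ^ σ) else 0

lemma cubePairTerm_nonneg (k : ℕ) (σ : ℝ) (nm : ℕ × ℕ) : 0 ≤ cubePairTerm k σ nm := by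
  unfold cubePairTerm
  split_ifs <;> positivity

lemma cubePairTerm_eq_zero {k : ℕ} {σ : ℝ} {nm : ℕ × ℕ} (h : nm.1 * nm.2 = 0) :
    cubePairTerm k σ nm = 0 :=
  if_neg fun ⟨hn, hm, _⟩ ↦ (Nat.mul_pos hn hm).ne' h

lemma sum_divisorsAntidiagonal_cubePairTerm_le (k : ℕ) (σ : ℝ) (N : ℕ) :
    ∑ nm ∈ N.divisorsAntidiagonal, cubePairTerm k σ nm ≤ powerfulTerm (2 * k) σ N := by
  have hterm : ∀ nm ∈ N.divisorsAntidiagonal, cubePairTerm k σ nm ≤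
      if IsPowerful N then (dk k nm.1 * dk k nm.2 : ℝ) * (N : ℝ) ^ (-σ) else 0 := by
    rintro ⟨n, m⟩ hnm
    obtain ⟨rfl, -⟩ := Nat.mem_divisorsAntidiagonal.1 hnm
    unfold cubePairTerm
    split_ifs with hcube hpow hpow
    · rw [Nat.cast_mul, rpow_neg (by positivity), div_eq_mul_inv]
    · obtain ⟨hn, hm, c, hc⟩ := hcube
      exact absurd (isPowerful_mul_of_mul_sq_eq_cube hn.ne' hm.ne' hc) hpow
    · positivity
    · exact le_rfl
  refine (sum_le_sum hterm).trans_eq ?_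
  rw [powerfulTerm_apply, two_mul, dk_add]
  split_ifs
  · push_cast
    rw [sum_mul]
  · exact sum_const_zero

lemma summable_and_tsum_cubePairTerm_le (k : ℕ) {σ r : ℝ} (hσ : 1 / 2 ≤ σ) (hr₁ : 1 ≤ r)
    (hr₂ : r ≤ 2) (hσr : 1 < σ * r) :
    Summable (cubePairTerm k σ) ∧
      ∑' nm, cubePairTerm k σ nm ≤ exp (128 * k ^ r * log (1 + 1 / (σ * r - 1))) := by
  obtain ⟨hsum, hle⟩ := summable_and_tsum_powerfulTerm_le (2 * k) hσ hr₁ hr₂ hσr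
  obtain ⟨hsum', hle'⟩ := summable_and_tsum_le_of_sum_divisorsAntidiagonal_le
    (cubePairTerm_nonneg k σ) (fun _ ↦ cubePairTerm_eq_zero)
    (sum_divisorsAntidiagonal_cubePairTerm_le k σ) hsum
  refine ⟨hsum', hle'.trans (hle.trans (exp_le_exp.2 ?_))⟩
  have hlog : 0 ≤ log (1 + 1 / (σ * r - 1)) :=
    log_nonneg (le_add_of_nonneg_right (one_div_nonneg.2 (by linarith)))
  have hpow : ((2 * k : ℕ) : ℝ) ^ r ≤ 4 * k ^ r := by
    calc ((2 * k : ℕ) : ℝ) ^ r = 2 ^ r * k ^ r := by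
          rw [Nat.cast_mul, mul_rpow (by positivity) k.cast_nonneg, Nat.cast_ofNat]
      _ ≤ 2 ^ (2 : ℝ) * k ^ r :=
          mul_le_mul_of_nonneg_right (rpow_le_rpow_of_exponent_le one_le_two hr₂) (by positivity)
      _ = 4 * k ^ r := by norm_num
  refine mul_le_mul_of_nonneg_right ?_ hlog
  linarith

lemma log_one_add_le_two_mul_log {L : ℝ} (hL : 2 ≤ L) : log (1 + L) ≤ 2 * log L := by
  rw [← log_rpow (by linarith), rpow_two]
  exact log_le_log (by linarith) (by nlinarith)

lemma rpow_one_add_div_log {x : ℝ} (hx₀ : 0 < x) (hx₁ : x ≠ 1) (c : ℝ) :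
    x ^ (1 + c / log x) = exp c * x := by
  rw [rpow_add hx₀, rpow_one, rpow_def_of_pos hx₀,
    mul_div_cancel₀ _ (log_ne_zero_of_pos_of_ne_one hx₀ hx₁), mul_comm]

lemma rankin_exponent_bounds {C L η r : ℝ} (hL : 2 * |C| + 2 ≤ L) (hη : η ≤ C / L)
    (hr : r = 1 + (2 * |C| + 1) / L) :
    η ≤ 1 / 2 ∧ 1 ≤ r ∧ r ≤ 2 ∧ 1 / L ≤ (1 - η) * r - 1 := by
  have hC : 0 ≤ |C| := abs_nonneg C
  have hL₀ : 0 < L := by linarith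
  have hηC : η ≤ |C| / L := hη.trans (by gcongr; exact le_abs_self C)
  have hCL : |C| / L ≤ 1 / 2 := by
    rw [div_le_iff₀ hL₀]
    linarith
  have hr₁ : 1 ≤ r := hr ▸ le_add_of_nonneg_right (by positivity)
  have hr₂ : r ≤ 2 := by
    have : (2 * |C| + 1) / L ≤ 1 := (div_le_one hL₀).2 (by linarith)
    linarith
  have hηr : η * r ≤ |C| / L * 2 := by gcongr
  have hr' : r = 1 + 2 * (|C| / L) + 1 / L := by rw [hr]; ring
  exact ⟨hηC.trans hCL, hr₁, hr₂, by linarith⟩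

theorem divisor_sum_cube_bound_general (C : ℝ) :
    ∃ A : ℝ, ∃ k₀ : ℕ, ∀ k : ℕ, k₀ ≤ k → ∀ η : ℝ, η ≤ C / log k →
      Summable (cubePairTerm k (1 - η)) ∧
        ∑' nm, cubePairTerm k (1 - η) nm ≤ exp (A * k * log (log k)) := by
  obtain ⟨k₀, hk₀⟩ := Filter.eventually_atTop.1 <|
    (tendsto_log_atTop.comp tendsto_natCast_atTop_atTop).eventually_ge_atTop (2 * |C| + 2)
  refine ⟨256 * exp (2 * |C| + 1), k₀, fun k hk η hη ↦ ?_⟩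
  have hL : 2 * |C| + 2 ≤ log k := hk₀ k hk
  have hL₂ : 2 ≤ log k := by linarith [abs_nonneg C]
  have hk₁ : (1 : ℝ) < k := (log_pos_iff k.cast_nonneg).1 (by linarith)
  set r := 1 + (2 * |C| + 1) / log k with hr
  obtain ⟨hη₂, hr₁, hr₂, hσr⟩ := rankin_exponent_bounds hL hη hr
  have hσr₀ : 0 < (1 - η) * r - 1 := lt_of_lt_of_le (by positivity) hσr
  obtain ⟨hsum, hle⟩ :=
    summable_and_tsum_cubePairTerm_le k (σ := 1 - η) (by linarith) hr₁ hr₂ (by linarith)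
  refine ⟨hsum, hle.trans (exp_le_exp.2 ?_)⟩
  have hlog : log (1 + 1 / ((1 - η) * r - 1)) ≤ 2 * log (log k) := by
    refine (log_le_log (by positivity) ?_).trans (log_one_add_le_two_mul_log hL₂)
    gcongr
    exact (one_div_le hσr₀ (by linarith)).2 hσr
  calc 128 * (k : ℝ) ^ r * log (1 + 1 / ((1 - η) * r - 1))
      ≤ 128 * (k : ℝ) ^ r * (2 * log (log k)) := by gcongr
    _ = 256 * exp (2 * |C| + 1) * k * log (log k) := by
        rw [hr, rpow_one_add_div_log (by linarith) hk₁.ne']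
        ring

/-- There is an absolute constant `A` such that for every sufficiently large integer `k` and
every real `0 ≤ η ≤ 1 / log k`, the sum over pairs of positive integers `n, m` with
`n * m^2` a perfect cube of `d_k(n) d_k(m) / (nm)^(1-η)` is at most `exp(A k log log k)`. -/
theorem divisor_sum_cube_bound :
    ∃ A : ℝ, ∃ k₀ : ℕ, ∀ k : ℕ, k₀ ≤ k → ∀ η : ℝ, 0 ≤ η → η ≤ 1 / Real.log k →
      (∑' nm : ℕ × ℕ,
        if 0 < nm.1 ∧ 0 < nm.2 ∧ (∃ c : ℕ, nm.1 * nm.2 ^ 2 = c ^ 3)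
        then (dk k nm.1 * dk k nm.2 : ℝ) / ((nm.1 * nm.2 : ℝ) ^ (1 - η)) else 0)
      ≤ Real.exp (A * k * Real.log (Real.log k)) := by
  obtain ⟨A, k₀, h⟩ := divisor_sum_cube_bound_general 1
  exact ⟨A, k₀, fun k hk η _ hη ↦ (h k hk η hη).2⟩
end

section
/- Let ℓ be a positive integer and y ≥ 2. Then the sum over 2ℓ-tuples of primes p_1,...,p_{2ℓ} all exceeding y such that p_1···p_ℓ·p_{ℓ+1}²···p_{2ℓ}² is a perfect cube, of 1/(p_1···p_{2ℓ}), is at most 2^ℓ ℓ! (Σ_{p>y} 1/p²)^{ℓ}. -/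
attribute [local instance] Classical.propDecidable

/-! Let the `X q` be independent uniform `k`-th roots of unity (`k = 3` for cubes) and put
`W = ∑ q, w q * X q`, where `w q = 1 / q` for the primes `q` in question. By orthogonality, the sum
over the tuples for which each prime carries total exponent zero modulo `k` is `E |W| ^ (2 * ℓ)`.

The first prime of such a tuple cannot occur only once, so it reappears at one of the other
`2 * ℓ - 1` positions. A union bound over that position merges two factors into one that is at most
`σ² = ∑ q, w q ^ 2`, and bounding the remaining factors by absolute values leaves
`E |W| ^ (2 * ℓ) ≤ (2 * ℓ - 1) * σ² * E |W| ^ (2 * ℓ - 2)`. By induction,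
`E |W| ^ (2 * ℓ) ≤ (2 * ℓ - 1)‼ * σ ^ (2 * ℓ) ≤ 2 ^ ℓ * ℓ ! * σ ^ (2 * ℓ)`.
-/

open Finset
open scoped BigOperators ComplexConjugate Nat

section Words

variable {k : ℕ} {κ ι : Type*} [Fintype κ] [DecidableEq ι]

/-- The word `p`, whose `i`-th letter carries the exponent `e i`, cancels modulo `k`: the exponents
carried by each letter add up to zero. For words of primes this is what makes `∏ i, p i ^ e i` a
`k`-th power. -/
def ExponentsCancel (e : κ → ZMod k) (p : κ → ι) : Prop :=
  ∀ q, ∑ i with p i = q, e i = 0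

lemma ExponentsCancel.exists_ne_apply_eq {e : κ → ZMod k} {p : κ → ι} (h : ExponentsCancel e p)
    {i : κ} (hi : e i ≠ 0) : ∃ j ≠ i, p j = p i := by
  by_contra! hne
  refine hi ((h (p i)).symm.trans (sum_eq_single_of_mem i (by simp) fun j hj hji ↦ ?_)).symm
  exact absurd (mem_filter.1 hj).2 (hne j hji)

lemma ExponentsCancel.of_comp {α : Type*} [DecidableEq α] {f : ι → α} (hf : f.Injective)
    {e : κ → ZMod k} {p : κ → ι} (h : ExponentsCancel e (f ∘ p)) : ExponentsCancel e p := fun q ↦ by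
  simpa only [Function.comp_apply, hf.eq_iff] using h (f q)

lemma exponentsCancel_of_prod_pow_eq_pow {p : κ → ℕ} (hp : ∀ i, (p i).Prime) {a : κ → ℕ} {c : ℕ}
    (h : ∏ i, p i ^ a i = c ^ k) : ExponentsCancel (fun i ↦ (a i : ZMod k)) p := fun q ↦ by
  have hfac : ∑ i, (if p i = q then a i else 0) = k * c.factorization q := by
    simpa [Nat.factorization_prod_apply, (hp _).ne_zero, (hp _).factorization,
      Finsupp.single_apply] using congrArg (fun n ↦ n.factorization q) h
  simpa [sum_filter] using congrArg (Nat.cast : ℕ → ZMod k) hfac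

lemma sum_mul_apply_eq [Fintype ι] (e : κ → ZMod k) (p : κ → ι) (ω : ι → ZMod k) :
    ∑ i, e i * ω (p i) = ∑ q, (∑ i with p i = q, e i) * ω q := by
  simp only [sum_mul, sum_filter, ite_mul, zero_mul]
  rw [sum_comm]
  simp

lemma exponentsCancel_iff_forall_sum_eq_zero [Finite ι] {e : κ → ZMod k} {p : κ → ι} :
    ExponentsCancel e p ↔ ∀ ω : ι → ZMod k, ∑ i, e i * ω (p i) = 0 := by
  cases nonempty_fintype ι
  refine ⟨fun h ω ↦ ?_, fun h q ↦ ?_⟩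
  · rw [sum_mul_apply_eq]
    exact sum_eq_zero fun q _ ↦ by rw [h q, zero_mul]
  · simpa [sum_mul_apply_eq, Pi.single_apply, sum_filter] using h (Pi.single q 1)

lemma exponentsCancel_cons_iff {n : ℕ} {e : Fin (n + 1) → ZMod k} {p : Fin n → ι} {j : Fin n} :
    ExponentsCancel e (Fin.cons (p j) p : Fin (n + 1) → ι) ↔
      ExponentsCancel (Fin.tail e + Pi.single j (e 0)) p := by
  refine forall_congr' fun q ↦ ?_
  have hj : ∑ i with p i = q, (Pi.single j (e 0) : Fin n → ZMod k) i =
      if p j = q then e 0 else 0 := by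
    simp only [Pi.single_apply, sum_ite_eq', mem_filter, mem_univ, true_and]
  simp [Pi.add_apply, sum_add_distrib, hj, sum_filter, Fin.sum_univ_succ, Fin.tail, add_comm]

lemma addChar_sum_eq_prod {A M : Type*} [AddCommMonoid A] [CommMonoid M] (ψ : AddChar A M)
    (f : κ → A) : ψ (∑ i, f i) = ∏ i, ψ (f i) :=
  map_prod ψ.toMonoidHom (fun i ↦ Multiplicative.ofAdd (f i)) univ

lemma expect_prod_stdAddChar [Fintype ι] [NeZero k] (e : κ → ZMod k) (p : κ → ι) :
    𝔼 ω : ι → ZMod k, ∏ i, (ZMod.stdAddChar (e i * ω (p i)) : ℂ) =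
      if ExponentsCancel e p then 1 else 0 := by
  let L : (ι → ZMod k) →+ ZMod k :=
    ∑ i, (AddMonoidHom.mulLeft (e i)).comp (Pi.evalAddMonoidHom _ (p i))
  have hL (ω) : L ω = ∑ i, e i * ω (p i) := by simp [L]
  have := AddChar.expect_eq_ite ((ZMod.stdAddChar (N := k)).compAddMonoidHom L)
  simp only [AddChar.compAddMonoidHom_apply, hL, addChar_sum_eq_prod] at this
  rw [this]
  congr 1
  rw [exponentsCancel_iff_forall_sum_eq_zero, AddChar.eq_zero_iff]
  simp only [AddChar.compAddMonoidHom_apply, hL,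
    ← ZMod.injective_stdAddChar.eq_iff, AddChar.map_zero_eq_one]

end Words

section Moments

variable {k : ℕ} {κ ι : Type*} [Fintype ι]

/-- The random sum `W = ∑ q, v q * X q` of the argument, with `X q = exp (2πi ω q / k)` for `ω`
uniform in `ι → ZMod k`, each `X q` being raised to the power `a`. -/
noncomputable def charSum [NeZero k] (v : ι → ℝ) (a : ZMod k) (ω : ι → ZMod k) : ℂ :=
  ∑ q, v q * ZMod.stdAddChar (a * ω q)

lemma norm_charSum_le [NeZero k] {v : ι → ℝ} (hv : ∀ q, 0 ≤ v q) (a : ZMod k)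
    (ω : ι → ZMod k) : ‖charSum v a ω‖ ≤ ∑ q, v q :=
  norm_sum_le_of_le _ fun q _ ↦ by simp [abs_of_nonneg (hv q)]

lemma charSum_neg [NeZero k] (v : ι → ℝ) (a : ZMod k) (ω : ι → ZMod k) :
    charSum v (-a) ω = conj (charSum v a ω) := by
  simp [charSum, AddChar.map_neg_eq_conj]

variable [DecidableEq ι]

/-- The absolute moment `E |W| ^ n` of the random sum `W = charSum w 1`. -/
noncomputable def charMoment (k : ℕ) [NeZero k] (w : ι → ℝ) (n : ℕ) : ℝ :=
  𝔼 ω : ι → ZMod k, ‖charSum w 1 ω‖ ^ n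

/-- The sum over all words `p` cancelling under the exponents `e` of the weight `∏ i, v i (p i)`;
the weight `v i` of a letter may depend on its position `i`. -/
noncomputable def cancelSum [Fintype κ] [DecidableEq κ] (v : κ → ι → ℝ) (e : κ → ZMod k) : ℝ :=
  ∑ p : κ → ι, if ExponentsCancel e p then ∏ i, v i (p i) else 0

lemma cancelSum_eq_expect [Fintype κ] [DecidableEq κ] [NeZero k] (v : κ → ι → ℝ)
    (e : κ → ZMod k) :
    (cancelSum v e : ℂ) = 𝔼 ω, ∏ i, charSum (v i) (e i) ω := by
  calc (cancelSum v e : ℂ)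
      = ∑ p : κ → ι, (∏ i, (v i (p i) : ℂ)) *
          𝔼 ω : ι → ZMod k, ∏ i, ZMod.stdAddChar (e i * ω (p i)) := by
        simp [cancelSum, expect_prod_stdAddChar, apply_ite]
    _ = 𝔼 ω : ι → ZMod k, ∑ p : κ → ι, ∏ i, (v i (p i) * ZMod.stdAddChar (e i * ω (p i)) : ℂ) := by
        simp only [mul_expect, expect_sum_comm, prod_mul_distrib]
    _ = 𝔼 ω, ∏ i, charSum (v i) (e i) ω := by
        simp only [charSum, prod_univ_sum, Fintype.piFinset_univ]

lemma cancelSum_le_expect_prod_norm [Fintype κ] [DecidableEq κ] [NeZero k] (v : κ → ι → ℝ)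
    (e : κ → ZMod k) :
    cancelSum v e ≤ 𝔼 ω, ∏ i, ‖charSum (v i) (e i) ω‖ := by
  calc cancelSum v e ≤ ‖(cancelSum v e : ℂ)‖ := by simpa using le_abs_self _
    _ ≤ 𝔼 ω, ‖∏ i, charSum (v i) (e i) ω‖ := by
        rw [cancelSum_eq_expect]
        exact RCLike.norm_expect_le (K := ℂ)
    _ = 𝔼 ω, ∏ i, ‖charSum (v i) (e i) ω‖ := by simp only [norm_prod]

lemma cancelSum_merge {n : ℕ} (v : Fin (n + 1) → ι → ℝ) (e : Fin (n + 1) → ZMod k) (j : Fin n) :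
    cancelSum (Fin.tail v * Pi.mulSingle j (v 0)) (Fin.tail e + Pi.single j (e 0)) =
      ∑ p : Fin n → ι, if ExponentsCancel e (Fin.cons (p j) p : Fin (n + 1) → ι) then
        v 0 (p j) * ∏ i, v i.succ (p i) else 0 := by
  have hweight (p : Fin n → ι) :
      ∏ i, (Fin.tail v * Pi.mulSingle j (v 0) : Fin n → ι → ℝ) i (p i) =
        v 0 (p j) * ∏ i, v i.succ (p i) := by
    simp only [Pi.mul_apply, prod_mul_distrib, Pi.mulSingle_apply, ite_apply, Pi.one_apply,
      prod_ite_eq', mem_univ, if_true, Fin.tail, mul_comm]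
  refine sum_congr rfl fun p _ ↦ ?_
  rw [hweight]
  exact if_congr exponentsCancel_cons_iff.symm rfl rfl

lemma cancelSum_le_sum_merge {n : ℕ} {v : Fin (n + 1) → ι → ℝ} (hv : ∀ i q, 0 ≤ v i q)
    {e : Fin (n + 1) → ZMod k} (he : e 0 ≠ 0) :
    cancelSum v e ≤ ∑ j : Fin n,
      cancelSum (Fin.tail v * Pi.mulSingle j (v 0)) (Fin.tail e + Pi.single j (e 0)) := by
  let F (q : ι) (p : Fin n → ι) : ℝ :=
    if ExponentsCancel e (Fin.cons q p : Fin (n + 1) → ι) then v 0 q * ∏ i, v i.succ (p i) else 0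
  have hF (q p) : 0 ≤ F q p :=
    ite_nonneg (mul_nonneg (hv 0 q) (prod_nonneg fun i _ ↦ hv i.succ (p i))) le_rfl
  have hunion (q p) : F q p ≤ ∑ j, if p j = q then F q p else 0 := by
    by_cases h : ExponentsCancel e (Fin.cons q p : Fin (n + 1) → ι)
    · obtain ⟨i, hi, hpi⟩ := h.exists_ne_apply_eq he
      obtain ⟨j, rfl⟩ := Fin.exists_succ_eq.2 hi
      have hj : p j = q := by simpa using hpi
      calc F q p = if p j = q then F q p else 0 := (if_pos hj).symm
        _ ≤ _ := single_le_sum (f := fun j ↦ if p j = q then F q p else 0)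
            (fun i _ ↦ ite_nonneg (hF q p) le_rfl) (mem_univ j)
    · simp [F, h]
  calc cancelSum v e = ∑ q, ∑ p, F q p := by
        rw [← Fintype.sum_prod_type']
        refine (Fintype.sum_equiv (Fin.consEquiv fun _ : Fin (n + 1) ↦ ι) _ _ fun x ↦ ?_).symm
        simp [F, Fin.consEquiv, Fin.prod_univ_succ]
    _ ≤ ∑ q, ∑ p, ∑ j, if p j = q then F q p else 0 :=
        sum_le_sum fun q _ ↦ sum_le_sum fun p _ ↦ hunion q p
    _ = ∑ p, ∑ j, ∑ q, if p j = q then F q p else 0 := by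
        rw [sum_comm]
        exact sum_congr rfl fun p _ ↦ sum_comm
    _ = ∑ p, ∑ j, F (p j) p := by simp
    _ = _ := by simp only [sum_comm (γ := Fin n), cancelSum_merge, F]

lemma cancelSum_merge_const_le [NeZero k] {n : ℕ} {w : ι → ℝ} {e : Fin (n + 2) → ZMod k}
    (he : ∀ i, e i = 1 ∨ e i = -1) (j : Fin (n + 1)) :
    cancelSum (Fin.tail (fun _ : Fin (n + 2) ↦ w) * Pi.mulSingle j w)
        (Fin.tail e + Pi.single j (e 0)) ≤ (∑ q, w q ^ 2) * charMoment k w n := by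
  set v : Fin (n + 1) → ι → ℝ := Fin.tail (fun _ : Fin (n + 2) ↦ w) * Pi.mulSingle j w with hv
  set e' := Fin.tail e + Pi.single j (e 0) with he'
  have hj (ω : ι → ZMod k) : ‖charSum (v j) (e' j) ω‖ ≤ ∑ q, w q ^ 2 := by
    have hvj : v j = fun q ↦ w q ^ 2 := by ext q; simp [hv, Fin.tail, sq]
    simpa [hvj] using norm_charSum_le (v := v j) (by simp [hvj, sq_nonneg]) (e' j) ω
  have hne (ω : ι → ZMod k) (i) (hi : i ∈ ({j}ᶜ : Finset (Fin (n + 1)))) :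
      ‖charSum (v i) (e' i) ω‖ = ‖charSum w 1 ω‖ := by
    have hij : i ≠ j := by simpa using hi
    have hvi : v i = w := by simp [hv, hij, Fin.tail]
    have hei : e' i = e i.succ := by simp [he', hij, Fin.tail]
    rcases he i.succ with h | h <;> simp [hvi, hei, h, charSum_neg]
  refine (cancelSum_le_expect_prod_norm v e').trans ?_
  rw [charMoment, mul_expect]
  refine expect_le_expect fun ω _ ↦ ?_
  rw [Fintype.prod_eq_mul_prod_compl j, prod_congr rfl (hne ω), prod_const, card_compl,
    Fintype.card_fin, card_singleton, Nat.add_sub_cancel]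
  gcongr
  exact hj ω

lemma cancelSum_const_le [NeZero k] [Nontrivial (ZMod k)] {n : ℕ} {w : ι → ℝ} (hw : ∀ q, 0 ≤ w q)
    {e : Fin (n + 2) → ZMod k} (he : ∀ i, e i = 1 ∨ e i = -1) :
    cancelSum (fun _ ↦ w) e ≤ (n + 1) * ((∑ q, w q ^ 2) * charMoment k w n) := by
  have he0 : e 0 ≠ 0 := by rcases he 0 with h | h <;> simp [h]
  calc cancelSum (fun _ ↦ w) e ≤ _ := cancelSum_le_sum_merge (fun _ ↦ hw) he0
    _ ≤ ∑ _j : Fin (n + 1), (∑ q, w q ^ 2) * charMoment k w n :=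
        sum_le_sum fun j _ ↦ cancelSum_merge_const_le he j
    _ = _ := by simp

end Moments

section Balanced

/-- The exponents `1, …, 1, -1, …, -1` of `W ^ ℓ * conj W ^ ℓ`. -/
def halfSigns (k ℓ : ℕ) (i : Fin (2 * ℓ)) : ZMod k :=
  if i.val < ℓ then 1 else -1

lemma prod_halfSigns {k : ℕ} {M : Type*} [CommMonoid M] (f : ZMod k → M) (ℓ : ℕ) :
    ∏ i, f (halfSigns k ℓ i) = f 1 ^ ℓ * f (-1) ^ ℓ := by
  simp only [halfSigns, apply_ite f]
  rw [Fin.prod_univ_eq_prod_range (fun i ↦ if i < ℓ then f 1 else f (-1)), two_mul, prod_range_add]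
  congr 1
  · rw [prod_congr rfl fun i hi ↦ if_pos (mem_range.1 hi), prod_const, card_range]
  · simp

variable {k : ℕ} [NeZero k] {ι : Type*} [Fintype ι] [DecidableEq ι]

lemma cancelSum_halfSigns (w : ι → ℝ) (ℓ : ℕ) :
    cancelSum (fun _ ↦ w) (halfSigns k ℓ) = charMoment k w (2 * ℓ) := by
  apply Complex.ofReal_injective
  rw [cancelSum_eq_expect, charMoment, Complex.ofReal_expect]
  refine expect_congr rfl fun ω _ ↦ ?_
  rw [prod_halfSigns fun a ↦ charSum w a ω, charSum_neg, ← mul_pow, Complex.mul_conj', pow_mul]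
  push_cast
  rfl

variable [Nontrivial (ZMod k)]

lemma charMoment_two_mul_le {w : ι → ℝ} (hw : ∀ q, 0 ≤ w q) (ℓ : ℕ) :
    charMoment k w (2 * ℓ) ≤ (2 * ℓ - 1)‼ * (∑ q, w q ^ 2) ^ ℓ := by
  induction ℓ with
  | zero => simp [charMoment]
  | succ ℓ ih =>
    have hsigns (i) : halfSigns k (ℓ + 1) i = 1 ∨ halfSigns k (ℓ + 1) i = -1 := ite_eq_or_eq ..
    calc charMoment k w (2 * (ℓ + 1))
        = cancelSum (fun _ ↦ w) (halfSigns k (ℓ + 1)) := (cancelSum_halfSigns w _).symm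
      _ ≤ ((2 * ℓ : ℕ) + 1) * ((∑ q, w q ^ 2) * charMoment k w (2 * ℓ)) :=
          cancelSum_const_le hw hsigns
      _ ≤ ((2 * ℓ : ℕ) + 1) * ((∑ q, w q ^ 2) * ((2 * ℓ - 1)‼ * (∑ q, w q ^ 2) ^ ℓ)) := by gcongr
      _ = (2 * (ℓ + 1) - 1)‼ * (∑ q, w q ^ 2) ^ (ℓ + 1) := by
          rw [show 2 * (ℓ + 1) - 1 = 2 * ℓ + 1 by lia, Nat.doubleFactorial_add_one]
          push_cast
          ring

end Balanced

lemma sum_exponentsCancel_halfSigns_le {α : Type*} [DecidableEq α] {k : ℕ} [NeZero k]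
    [Nontrivial (ZMod k)] {w : α → ℝ} (hw : ∀ q, 0 ≤ w q) (hsum : Summable fun q ↦ w q ^ 2) {ℓ : ℕ}
    (T : Finset (Fin (2 * ℓ) → α)) :
    ∑ p ∈ T, (if ExponentsCancel (halfSigns k ℓ) p then ∏ i, w (p i) else 0) ≤
      (2 * ℓ - 1)‼ * (∑' q, w q ^ 2) ^ ℓ := by
  let s : Finset α := T.biUnion fun p ↦ univ.image p
  let coe : (Fin (2 * ℓ) → s) ↪ (Fin (2 * ℓ) → α) :=
    (Function.Embedding.subtype (· ∈ s)).arrowCongrRight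
  have hT : T ⊆ univ.map coe := fun p hp ↦ by
    refine mem_map.2 ⟨fun i ↦ ⟨p i, mem_biUnion.2 ⟨p, hp, mem_image_of_mem p (mem_univ i)⟩⟩, ?_⟩
    simp [coe, funext_iff]
  have hprod (p : Fin (2 * ℓ) → α) : 0 ≤ ∏ i, w (p i) := prod_nonneg fun i _ ↦ hw (p i)
  calc ∑ p ∈ T, (if ExponentsCancel (halfSigns k ℓ) p then ∏ i, w (p i) else 0)
      ≤ ∑ p ∈ univ.map coe, (if ExponentsCancel (halfSigns k ℓ) p then ∏ i, w (p i) else 0) := by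
        exact sum_le_sum_of_subset_of_nonneg hT fun p _ _ ↦ ite_nonneg (hprod p) le_rfl
    _ ≤ cancelSum (fun _ (q : s) ↦ w q) (halfSigns k ℓ) := by
        rw [sum_map, cancelSum]
        refine sum_le_sum fun p _ ↦ ?_
        split_ifs with h h'
        · rfl
        · exact absurd (h.of_comp Subtype.val_injective) h'
        · exact hprod _
        · rfl
    _ ≤ (2 * ℓ - 1)‼ * (∑ q : s, w q ^ 2) ^ ℓ := by
        rw [cancelSum_halfSigns]
        exact charMoment_two_mul_le (w := fun q : s ↦ w q) (fun q ↦ hw q) ℓ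
    _ ≤ (2 * ℓ - 1)‼ * (∑' q, w q ^ 2) ^ ℓ := by
        gcongr
        rw [sum_coe_sort s (fun q ↦ w q ^ 2)]
        exact hsum.sum_le_tsum s fun q _ ↦ sq_nonneg _

lemma exponentsCancel_halfSigns_of_prod_eq_pow {k ℓ : ℕ} (hk : 1 ≤ k) {p : Fin (2 * ℓ) → ℕ}
    (hp : ∀ i, (p i).Prime) {c : ℕ}
    (h : ∏ i, (if i.val < ℓ then p i else p i ^ (k - 1)) = c ^ k) :
    ExponentsCancel (halfSigns k ℓ) p := by
  have hpow : ∏ i, p i ^ (if i.val < ℓ then 1 else k - 1) = c ^ k := by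
    simpa only [pow_ite, pow_one] using h
  convert exponentsCancel_of_prod_pow_eq_pow hp hpow using 2 with i
  by_cases hi : i.val < ℓ <;> simp [halfSigns, hi, Nat.cast_sub hk]

lemma doubleFactorial_two_mul_sub_one_le (n : ℕ) : (2 * n - 1)‼ ≤ 2 ^ n * n ! := by
  rw [← Nat.doubleFactorial_two_mul]
  induction n with
  | zero => simp
  | succ n ih =>
    rw [show 2 * (n + 1) - 1 = 2 * n + 1 by lia, Nat.doubleFactorial_add_one, mul_add_one,
      Nat.doubleFactorial_add_two]
    gcongr
    lia

theorem prime_tuple_cube_sum_bound_general {k : ℕ} (hk : 2 ≤ k) {P : ℕ → Prop} [DecidablePred P]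
    (hP : ∀ q, P q → q.Prime) (ℓ : ℕ) :
    (∑' p : Fin (2 * ℓ) → ℕ,
      if (∀ i, P (p i)) ∧
          (∃ c : ℕ, (∏ i : Fin (2 * ℓ), if i.val < ℓ then p i else (p i) ^ (k - 1)) = c ^ k)
      then (1 : ℝ) / ∏ i, (p i : ℝ) else 0)
    ≤ (2 * ℓ - 1)‼ * (∑' q : ℕ, if P q then (1 : ℝ) / q ^ 2 else 0) ^ ℓ := by
  have : NeZero k := ⟨by lia⟩
  have : Fact (1 < k) := ⟨hk⟩
  let w (q : ℕ) : ℝ := if P q then 1 / q else 0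
  have hw (q) : 0 ≤ w q := ite_nonneg (by positivity) le_rfl
  have hw_sq (q) : w q ^ 2 = if P q then (1 : ℝ) / q ^ 2 else 0 := by simp [w, ite_pow]
  have hsum : Summable fun q ↦ w q ^ 2 :=
    (Real.summable_one_div_nat_pow.2 one_lt_two).of_nonneg_of_le (fun q ↦ sq_nonneg _) fun q ↦ by
      rw [hw_sq]
      split_ifs <;> simp
  simp only [← hw_sq]
  refine Real.tsum_le_of_sum_le (fun p ↦ ite_nonneg (by positivity) le_rfl) fun T ↦
    (sum_le_sum fun p _ ↦ ?_).trans (sum_exponentsCancel_halfSigns_le (k := k) hw hsum T)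
  split_ifs with h hcancel hcancel
  · simp [w, h.1]
  · obtain ⟨hp, c, hc⟩ := h
    exact absurd (exponentsCancel_halfSigns_of_prod_eq_pow (by lia) (fun i ↦ hP _ (hp i)) hc)
      hcancel
  · exact prod_nonneg fun i _ ↦ hw (p i)
  · rfl

/-- For a positive integer `ℓ` and real `y ≥ 2`, the sum over ordered `2ℓ`-tuples of primes
`p₁, …, p₂ℓ`, all exceeding `y`, such that `p₁ ⋯ p_ℓ p_{ℓ+1}² ⋯ p_{2ℓ}²` is a perfect cube,
of `1 / (p₁ ⋯ p_{2ℓ})`, is at most `2^ℓ ℓ! (∑_{p > y} 1/p²)^ℓ`. -/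
theorem prime_tuple_cube_sum_bound (ℓ : ℕ) (hℓ : 1 ≤ ℓ) (y : ℝ) (hy : 2 ≤ y) :
    (∑' p : Fin (2 * ℓ) → ℕ,
      if (∀ i, (p i).Prime ∧ y < p i) ∧
          (∃ c : ℕ, (∏ i : Fin (2 * ℓ), if i.val < ℓ then p i else (p i) ^ 2) = c ^ 3)
      then (1 : ℝ) / ∏ i, (p i : ℝ) else 0)
    ≤ 2 ^ ℓ * (Nat.factorial ℓ) *
        (∑' q : ℕ, if q.Prime ∧ y < q then (1 : ℝ) / q ^ 2 else 0) ^ ℓ := by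
  refine (prime_tuple_cube_sum_bound_general (k := 3) (P := fun q ↦ q.Prime ∧ y < q) (by norm_num)
    (fun q hq ↦ hq.1) ℓ).trans (mul_le_mul_of_nonneg_right ?_ ?_)
  · exact_mod_cast doubleFactorial_two_mul_sub_one_le ℓ
  · exact pow_nonneg (tsum_nonneg fun q ↦ ite_nonneg (by positivity) le_rfl) ℓ
end
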